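/- Let l ≥ 0 be an integer and let f : ℝ × ℝ^l → ℝ be a Lipschitz continuous function, and let F denote its almost-everywhere defined partial derivative in the first variable (the directional derivative of f in the direction of the first coordinate, which exists almost everywhere). Then the distributional derivative of f with respect to the first variable equals F: for every smooth compactly supported function φ : ℝ × ℝ^l → ℝ one has ∫ F(x,y)·φ(x,y) dx dy = − ∫ f(x,y)·(∂φ/∂x)(x,y) dx dy. -/

import Mathlib

open MeasureTheory Filter

/-!
By translation invariance, `∫ (f (p + t v) - f p) / t * φ p = ∫ f p * (φ (p - t v) - φ p) / t`
for every `t > 0`. The Lipschitz bounds on `f` and `φ` dominate both sides, so letting `t → 0` turns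
the difference quotients into almost-everywhere defined derivatives in the directions `v` and `-v`
(this is `LipschitzWith.integral_lineDeriv_mul_eq`). A partial derivative in the first variable is
the case `v = (1, 0)`.
-/

section PartialDerivative

theorem add_smul_one_zero {R M : Type*} [Semiring R] [AddCommMonoid M] [Module R M]
    (p : R × M) (t : R) : p + t • ((1, 0) : R × M) = (p.1 + t, p.2) := by
  ext <;> simp

variable {𝕜 E G : Type*} [NontriviallyNormedField 𝕜] [AddCommGroup E] [Module 𝕜 E]
  [NormedAddCommGroup G] [NormedSpace 𝕜 G]

theorem hasLineDerivAt_one_zero_iff {f : 𝕜 × E → G} {f' : G} {p : 𝕜 × E} :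
    HasLineDerivAt 𝕜 f f' p (1, 0) ↔ HasDerivAt (fun x ↦ f (x, p.2)) f' p.1 := by
  simp only [HasLineDerivAt, add_smul_one_zero, hasDerivAt_iff_tendsto_slope_zero, zero_add,
    add_zero]

theorem lineDeriv_one_zero (f : 𝕜 × E → G) (p : 𝕜 × E) :
    lineDeriv 𝕜 f p (1, 0) = deriv (fun x ↦ f (x, p.2)) p.1 := by
  simp only [lineDeriv, add_smul_one_zero]
  simpa only [add_zero] using deriv_comp_const_add (fun x ↦ f (x, p.2)) p.1 0

end PartialDerivative

section IntegrationByParts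

variable {E : Type*} [NormedAddCommGroup E] [NormedSpace ℝ E] [FiniteDimensional ℝ E]
  [MeasurableSpace E] [BorelSpace E] {C D : NNReal}

theorem integral_mul_eq_neg_integral_mul_lineDeriv {μ : Measure E} [μ.IsAddHaarMeasure]
    {f F φ : E → ℝ} {v : E} (hf : LipschitzWith C f)
    (hF : ∀ᵐ p ∂μ, HasLineDerivAt ℝ f (F p) p v)
    (hφ : LipschitzWith D φ) (hφc : HasCompactSupport φ) :
    ∫ p, F p * φ p ∂μ = -∫ p, f p * lineDeriv ℝ φ p v ∂μ := by
  calc ∫ p, F p * φ p ∂μ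
      = ∫ p, lineDeriv ℝ f p v * φ p ∂μ :=
        integral_congr_ae <| hF.mono fun p hp ↦ congrArg (· * φ p) hp.lineDeriv.symm
    _ = ∫ p, lineDeriv ℝ φ p (-v) * f p ∂μ := hf.integral_lineDeriv_mul_eq hφ hφc v
    _ = -∫ p, f p * lineDeriv ℝ φ p v ∂μ := by
        simp only [lineDeriv_neg, mul_comm, mul_neg, integral_neg]

theorem lipschitz_distributional_deriv_eq_ae_partial_deriv_general
    {μ : Measure (ℝ × E)} [μ.IsAddHaarMeasure] {f F φ : ℝ × E → ℝ} (hf : LipschitzWith C f)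
    (hF : ∀ᵐ p ∂μ, HasDerivAt (fun x ↦ f (x, p.2)) (F p) p.1)
    (hφ : LipschitzWith D φ) (hφc : HasCompactSupport φ) :
    ∫ p, F p * φ p ∂μ = -∫ p, f p * deriv (fun x ↦ φ (x, p.2)) p.1 ∂μ := by
  simpa only [lineDeriv_one_zero] using integral_mul_eq_neg_integral_mul_lineDeriv hf
    (hF.mono fun _ hp ↦ hasLineDerivAt_one_zero_iff.mpr hp) hφ hφc

end IntegrationByParts

/-- For a Lipschitz function `f : ℝ × ℝ^l → ℝ`, the distributional derivative
of `f` with respect to the first variable equals its almost-everywhere defined partial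
derivative `F`: for every smooth compactly supported test function `φ`,
`∫ F·φ = −∫ f·(∂φ/∂x)`. -/
theorem lipschitz_distributional_deriv_eq_ae_partial_deriv
    (l : ℕ) (C : NNReal) (f F : ℝ × (Fin l → ℝ) → ℝ)
    (hf : LipschitzWith C f) (hFmeas : Measurable F)
    (hF : ∀ᵐ p : ℝ × (Fin l → ℝ) ∂volume,
      Tendsto (fun h : ℝ => (f (p.1 + h, p.2) - f p) / h)
        (nhdsWithin 0 {0}ᶜ) (nhds (F p))) :
    ∀ φ : ℝ × (Fin l → ℝ) → ℝ, ContDiff ℝ (⊤ : ℕ∞) φ → HasCompactSupport φ →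
      ∫ p, F p * φ p = - ∫ p, f p * deriv (fun x => φ (x, p.2)) p.1 := by
  intro φ hφ hφc
  obtain ⟨D, hD⟩ := hφ.lipschitzWith_of_hasCompactSupport hφc (by simp)
  have hF' : ∀ᵐ p : ℝ × (Fin l → ℝ), HasDerivAt (fun x ↦ f (x, p.2)) (F p) p.1 :=
    hF.mono fun p hp ↦ by
      simpa only [hasDerivAt_iff_tendsto_slope_zero, smul_eq_mul, ← div_eq_inv_mul] using hp
  exact lipschitz_distributional_deriv_eq_ae_partial_deriv_general
    (μ := (volume : Measure ℝ).prod volume) hf hF' hD hφc
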